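/- arXiv:1205.2779 — 2 statements merged into one kernel-verified Lean document; each statement's English description precedes it below -/
import Mathlib

section
/- For every n ≥ 4, the derivation algebra of the naturally graded filiform Leibniz algebra NGF₂ has dimension n + 2, i.e. dim Der(NGF₂) = n + 2. -/
open scoped BigOperators

/-- The bilinear multiplication on `Fin n → ℂ` determined by structure constants
`c i j k` = coefficient of the basis vector `e k` in the product `[e i, e j]`
of basis vectors (all indices zero-based). -/
noncomputable def structMul (n : ℕ) (c : Fin n → Fin n → Fin n → ℂ) :
    (Fin n → ℂ) →ₗ[ℂ] (Fin n → ℂ) →ₗ[ℂ] (Fin n → ℂ) :=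
  LinearMap.mk₂ ℂ (fun x y k => ∑ i, ∑ j, x i * y j * c i j k)
    (by
      intro x x' y; funext k
      simp [add_mul, Finset.sum_add_distrib])
    (by
      intro a x y; funext k
      simp [Finset.mul_sum, mul_assoc])
    (by
      intro x y y'; funext k
      simp [mul_add, add_mul, Finset.sum_add_distrib])
    (by
      intro a x y; funext k
      simp only [Pi.smul_apply, smul_eq_mul, Finset.mul_sum]
      congr 1; funext i; congr 1; funext j; ring)

/-- The space of derivations of the algebra `(Fin n → ℂ, μ)`:
linear endomorphisms `d` with `d [x,y] = [d x, y] + [x, d y]`. -/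
noncomputable def derivations (n : ℕ)
    (μ : (Fin n → ℂ) →ₗ[ℂ] (Fin n → ℂ) →ₗ[ℂ] (Fin n → ℂ)) :
    Submodule ℂ (Module.End ℂ (Fin n → ℂ)) where
  carrier := {d | ∀ x y, d (μ x y) = μ (d x) y + μ x (d y)}
  add_mem' := by
    intro a b ha hb x y
    simp only [LinearMap.add_apply, ha x y, hb x y, map_add]
    abel
  zero_mem' := by intro x y; simp
  smul_mem' := by
    intro t a ha x y
    simp only [LinearMap.smul_apply, ha x y, map_smul, smul_add]

/-- Structure constants of `NGF₂`: `[e₁,e₁] = e₃`, `[eᵢ,e₁] = e_{i+1}` for `3 ≤ i ≤ n-1`. -/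
noncomputable def cNGF2 (n : ℕ) : Fin n → Fin n → Fin n → ℂ := fun i j k =>
  if j.val = 0 ∧ i.val = 0 ∧ k.val = 2 then 1
  else if j.val = 0 ∧ 2 ≤ i.val ∧ i.val ≤ n - 2 ∧ k.val = i.val + 1 then 1
  else 0

/-- The operator of right multiplication by the first basis vector. -/
noncomputable def shiftS (m : ℕ) : Module.End ℂ (Fin (m+4) → ℂ) where
  toFun x k := if k.val = 2 then x 0 else if 3 ≤ k.val then x ⟨k.val - 1, by omega⟩ else 0
  map_add' x y := by
    funext k
    simp only [Pi.add_apply]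
    split_ifs <;> simp
  map_smul' r x := by
    funext k
    simp only [Pi.smul_apply, RingHom.id_apply]
    split_ifs <;> simp

lemma shiftS_apply (m : ℕ) (x : Fin (m+4) → ℂ) (k : Fin (m+4)) :
    shiftS m x k = if k.val = 2 then x 0 else if 3 ≤ k.val then x ⟨k.val - 1, by omega⟩ else 0 :=
  rfl

lemma mul_eq_shift (m : ℕ) (x y : Fin (m+4) → ℂ) :
    structMul (m+4) (cNGF2 (m+4)) x y = y 0 • shiftS m x := by
  funext k
  have h1 : structMul (m+4) (cNGF2 (m+4)) x y k
      = ∑ i, ∑ j, x i * y j * cNGF2 (m+4) i j k := rfl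
  rw [h1]
  have h2 : ∀ i, ∑ j, x i * y j * cNGF2 (m+4) i j k = x i * y 0 * cNGF2 (m+4) i 0 k := by
    intro i
    apply Finset.sum_eq_single
    · intro j _ hj
      have : j.val ≠ 0 := fun h => hj (Fin.ext h)
      simp [cNGF2, this]
    · simp
  simp only [h2, Pi.smul_apply, smul_eq_mul, shiftS_apply]
  have hk := k.isLt
  split_ifs with hk2 hk3
  · rw [Finset.sum_eq_single 0]
    · simp [cNGF2, hk2, mul_comm]
    · intro i _ hi
      have : i.val ≠ 0 := fun h => hi (Fin.ext h)
      unfold cNGF2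
      rw [if_neg (by omega), if_neg (by omega), mul_zero]
    · simp
  · rw [Finset.sum_eq_single ⟨k.val - 1, by omega⟩]
    · unfold cNGF2
      rw [if_neg (by omega), if_pos (by simp; omega)]
      ring
    · intro i _ hi
      have : i.val ≠ k.val - 1 := fun h => hi (Fin.ext h)
      unfold cNGF2
      rw [if_neg (by omega), if_neg (by omega), mul_zero]
    · simp
  · rw [mul_zero]
    apply Finset.sum_eq_zero
    intro i _
    unfold cNGF2
    rw [if_neg (by omega), if_neg (by omega), mul_zero]

lemma mem_der_iff (m : ℕ) (d : Module.End ℂ (Fin (m+4) → ℂ)) :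
    d ∈ derivations (m+4) (structMul (m+4) (cNGF2 (m+4))) ↔
      ∀ x y : Fin (m+4) → ℂ, y 0 • d (shiftS m x) = y 0 • shiftS m (d x) + d y 0 • shiftS m x := by
  change (∀ x y, _ = _) ↔ _
  simp only [mul_eq_shift, map_smul]

lemma mem_der_of (m : ℕ) (d : Module.End ℂ (Fin (m+4) → ℂ)) (r : ℂ)
    (h0 : ∀ y, d y 0 = r * y 0) (h : ∀ x, d (shiftS m x) = shiftS m (d x) + r • shiftS m x) :
    d ∈ derivations (m+4) (structMul (m+4) (cNGF2 (m+4))) := by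
  rw [mem_der_iff]
  intro x y
  rw [h, h0, smul_add, smul_smul, mul_comm]

lemma shift_e0 (m : ℕ) : shiftS m (Pi.single 0 1) = Pi.single ⟨2, by omega⟩ 1 := by
  funext k
  rw [shiftS_apply]
  simp only [Pi.single_apply, Fin.ext_iff, Fin.val_zero]
  split_ifs <;> first | rfl | omega | contradiction

lemma shift_e1 (m : ℕ) : shiftS m (Pi.single 1 1) = 0 := by
  funext k
  rw [shiftS_apply]
  simp only [Pi.single_apply, Fin.ext_iff, Fin.val_zero, Fin.val_one, Pi.zero_apply]
  split_ifs <;> first | rfl | omega | contradiction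

lemma shift_ek (m k : ℕ) (h2 : 2 ≤ k) (hk : k + 1 < m + 4) :
    shiftS m (Pi.single ⟨k, by omega⟩ 1) = Pi.single ⟨k+1, hk⟩ 1 := by
  funext l
  rw [shiftS_apply]
  simp only [Pi.single_apply, Fin.ext_iff, Fin.val_zero]
  split_ifs <;> first | rfl | omega | contradiction

lemma shift_pow_e0 (m j : ℕ) (hj : j + 2 < m + 4) :
    (shiftS m ^ (j+1)) (Pi.single 0 1) = Pi.single ⟨j+2, hj⟩ 1 := by
  induction j with
  | zero => simpa using shift_e0 m
  | succ j ih =>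
    rw [pow_succ', Module.End.mul_apply, ih (by omega), shift_ek m (j+2) (by omega) (by omega)]

lemma shift_pow_e1 (m j : ℕ) : (shiftS m ^ (j+1)) (Pi.single 1 1) = 0 := by
  rw [pow_succ, Module.End.mul_apply, shift_e1, map_zero]

/-- The diagonal (grading) derivation. -/
noncomputable def diagD (m : ℕ) : Module.End ℂ (Fin (m+4) → ℂ) where
  toFun x k := (if k.val = 0 then 1 else if k.val = 1 then 0 else (k.val : ℂ)) * x k
  map_add' x y := by funext k; simp [mul_add]
  map_smul' r x := by funext k; simp; ring

lemma diagD_apply (m : ℕ) (x : Fin (m+4) → ℂ) (k : Fin (m+4)) :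
    diagD m x k = (if k.val = 0 then 1 else if k.val = 1 then 0 else (k.val : ℂ)) * x k := rfl

lemma diagD_mem (m : ℕ) :
    diagD m ∈ derivations (m+4) (structMul (m+4) (cNGF2 (m+4))) := by
  apply mem_der_of m _ 1
  · intro y; simp [diagD_apply]
  · intro x
    funext k
    rw [Pi.add_apply, Pi.smul_apply, diagD_apply, shiftS_apply, shiftS_apply, smul_eq_mul, one_mul]
    simp only [diagD_apply]
    by_cases h2 : k.val = 2
    · simp [h2]; ring
    · by_cases h3 : 3 ≤ k.val
      · obtain ⟨k, hk⟩ := k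
        obtain ⟨l, rfl⟩ : ∃ l, k = l + 3 := ⟨k - 3, by simp at h3; omega⟩
        simp
        ring
      · simp [h2, h3]

/-- The elementary map sending `e i` to `v`. -/
noncomputable def elemE (m : ℕ) (i : Fin (m+4)) (v : Fin (m+4) → ℂ) :
    Module.End ℂ (Fin (m+4) → ℂ) :=
  (LinearMap.proj i : (Fin (m+4) → ℂ) →ₗ[ℂ] ℂ).smulRight v

lemma elemE_apply (m : ℕ) (i : Fin (m+4)) (v x : Fin (m+4) → ℂ) : elemE m i v x = x i • v := rfl

lemma elemE_mem (m : ℕ) (i : Fin (m+4)) (v : Fin (m+4) → ℂ) (hi : i.val < 2)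
    (hv0 : v 0 = 0) (hv : shiftS m v = 0) :
    elemE m i v ∈ derivations (m+4) (structMul (m+4) (cNGF2 (m+4))) := by
  apply mem_der_of m _ 0
  · intro y; simp [elemE_apply, hv0]
  · intro x
    rw [elemE_apply, elemE_apply, map_smul, hv, shiftS_apply, if_neg (by omega), if_neg (by omega)]
    simp

lemma shift_pow_mem (m j : ℕ) :
    shiftS m ^ (j+1) ∈ derivations (m+4) (structMul (m+4) (cNGF2 (m+4))) := by
  apply mem_der_of m _ 0
  · intro y
    rw [pow_succ', Module.End.mul_apply, shiftS_apply]
    simp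
  · intro x
    rw [zero_smul, add_zero, ← Module.End.mul_apply, ← Module.End.mul_apply, ← pow_succ, ← pow_succ']

lemma shift_last (m : ℕ) : shiftS m (Pi.single (Fin.last (m+3)) 1) = 0 := by
  funext k
  rw [shiftS_apply]
  simp only [Pi.single_apply, Fin.ext_iff, Fin.val_zero, Fin.val_last, Pi.zero_apply]
  split_ifs <;> first | rfl | omega | contradiction

/-- Evaluation of a derivation on the generators. -/
noncomputable def evalD (m : ℕ) :
    Module.End ℂ (Fin (m+4) → ℂ) →ₗ[ℂ] ((Fin (m+4) → ℂ) × (ℂ × ℂ)) where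
  toFun d := (d (Pi.single 0 1), (d (Pi.single 1 1) 1, d (Pi.single 1 1) (Fin.last (m+3))))
  map_add' _ _ := rfl
  map_smul' _ _ := rfl

lemma evalD_inj (m : ℕ) (d : Module.End ℂ (Fin (m+4) → ℂ))
    (hd : d ∈ derivations (m+4) (structMul (m+4) (cNGF2 (m+4)))) (h : evalD m d = 0) : d = 0 := by
  rw [mem_der_iff] at hd
  have h0 : d (Pi.single 0 1) = 0 := congrArg Prod.fst h
  have h11 : d (Pi.single 1 1) 1 = 0 := congrArg (fun p => p.2.1) h
  have h1l : d (Pi.single 1 1) (Fin.last (m+3)) = 0 := congrArg (fun p => p.2.2) h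
  have comm : ∀ x, d (shiftS m x) = shiftS m (d x) := by
    intro x
    have := hd x (Pi.single 0 1)
    simpa [h0] using this
  have hz : d (Pi.single 1 1) 0 = 0 := by
    have := congrFun (hd (Pi.single 0 1) (Pi.single 1 1)) ⟨2, by omega⟩
    rw [shift_e0] at this
    simpa using this.symm
  have h1 : d (Pi.single 1 1) = 0 := by
    have hs : shiftS m (d (Pi.single 1 1)) = 0 := by rw [← comm, shift_e1, map_zero]
    funext k
    rw [Pi.zero_apply]
    by_cases k0 : k.val = 0
    · rw [show k = 0 from Fin.ext k0]; exact hz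
    by_cases k1 : k.val = 1
    · rw [show k = 1 from Fin.ext k1]; exact h11
    by_cases kl : k.val = m + 3
    · rw [show k = Fin.last (m+3) from Fin.ext kl]; exact h1l
    have := congrFun hs ⟨k.val + 1, by omega⟩
    rw [shiftS_apply, if_neg (by simp; omega), if_pos (by simp; omega)] at this
    simpa using this
  have hk : ∀ j (hj : j + 2 < m + 4), d (Pi.single ⟨j+2, hj⟩ 1) = 0 := by
    intro j
    induction j with
    | zero =>
      intro hj
      have := comm (Pi.single 0 1)
      rw [shift_e0, h0, map_zero] at this
      exact this
    | succ j ih =>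
      intro hj
      rw [← shift_ek m (j+2) (by omega) (by omega), comm, ih (by omega), map_zero]
  apply LinearMap.pi_ext'
  intro i
  apply LinearMap.ext_ring
  change d (Pi.single i 1) = 0
  by_cases k0 : i.val = 0
  · rw [show i = 0 from Fin.ext k0]; exact h0
  by_cases k1 : i.val = 1
  · rw [show i = 1 from Fin.ext k1]; exact h1
  have := hk (i.val - 2) (by omega)
  rwa [show (⟨i.val - 2 + 2, by omega⟩ : Fin (m+4)) = i from Fin.ext (by simp; omega)] at this

lemma evalD_surj (m : ℕ) (a : Fin (m+4) → ℂ) (b c : ℂ) :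
    ∃ d ∈ derivations (m+4) (structMul (m+4) (cNGF2 (m+4))), evalD m d = (a, (b, c)) := by
  have hl : (1 : Fin (m+4)) ≠ Fin.last (m+3) := by
    intro h; have := congrArg Fin.val h; simp at this
  have hl0 : (0 : Fin (m+4)) ≠ Fin.last (m+3) := by
    intro h; have := congrArg Fin.val h; simp at this
  refine ⟨a 0 • diagD m + a 1 • elemE m 0 (Pi.single 1 1) + b • elemE m 1 (Pi.single 1 1)
    + c • elemE m 1 (Pi.single (Fin.last (m+3)) 1)
    + ∑ j : Fin (m+2), a j.succ.succ • shiftS m ^ (j.val+1), ?_, ?_⟩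
  · refine add_mem (add_mem (add_mem (add_mem ?_ ?_) ?_) ?_) (sum_mem fun j _ => ?_) <;>
      apply Submodule.smul_mem
    · exact diagD_mem m
    · exact elemE_mem m _ _ (by simp) (by simp) (shift_e1 m)
    · exact elemE_mem m _ _ (by simp) (by simp) (shift_e1 m)
    · exact elemE_mem m _ _ (by simp) (by simp [hl0]) (shift_last m)
    · exact shift_pow_mem m _
  · have hD0 : diagD m (Pi.single 0 1) = Pi.single 0 1 := by
      funext k
      rw [diagD_apply]
      by_cases k0 : k = 0
      · subst k0; simp
      · simp [k0]
    have hD1 : diagD m (Pi.single 1 1) = 0 := by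
      funext k
      rw [diagD_apply]
      by_cases k0 : k = 1
      · subst k0; simp
      · simp [k0]
    refine Prod.ext ?_ (Prod.ext ?_ ?_)
    · change (_ : Module.End ℂ (Fin (m+4) → ℂ)) (Pi.single 0 1) = a
      have hs : ∀ j : Fin (m+2), (shiftS m ^ (j.val+1)) (Pi.single 0 1)
          = Pi.single j.succ.succ 1 := fun j => shift_pow_e0 m j.val (by omega)
      simp only [LinearMap.add_apply, LinearMap.smul_apply, LinearMap.sum_apply, hs, hD0,
        elemE_apply]
      conv_rhs => rw [← Finset.univ_sum_single a, Fin.sum_univ_succ, Fin.sum_univ_succ]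
      have hp : ∀ i, Pi.single i (a i) = a i • (Pi.single i 1 : Fin (m+4) → ℂ) := by
        intro i; rw [← Pi.single_smul]; simp
      simp only [hp]
      simp [add_assoc]
    · change (_ : Module.End ℂ (Fin (m+4) → ℂ)) (Pi.single 1 1) 1 = b
      simp [LinearMap.sum_apply, shift_pow_e1, hD1, elemE_apply, hl]
    · change (_ : Module.End ℂ (Fin (m+4) → ℂ)) (Pi.single 1 1) (Fin.last (m+3)) = c
      simp [LinearMap.sum_apply, shift_pow_e1, hD1, elemE_apply, hl.symm]

theorem dim_der_NGF2 (n : ℕ) (hn : 4 ≤ n) :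
    Module.finrank ℂ (derivations n (structMul n (cNGF2 n))) = n + 2 := by
  obtain ⟨m, rfl⟩ : ∃ m, n = m + 4 := ⟨n - 4, by omega⟩
  have e := LinearEquiv.ofBijective ((evalD m).domRestrict
    (derivations (m+4) (structMul (m+4) (cNGF2 (m+4))))) ⟨by
      refine (injective_iff_map_eq_zero _).2 ?_
      rintro ⟨d, hd⟩ h
      exact Subtype.ext (evalD_inj m d hd h), by
      rintro ⟨a, b, c⟩
      obtain ⟨d, hd, h⟩ := evalD_surj m a b c
      exact ⟨⟨d, hd⟩, h⟩⟩
  rw [e.finrank_eq]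
  simp
end

section
/- Let n ≥ 5 and L = L(β₃,…,β_{n−1},γ) ∈ SLbₙ. If γ = 0 and βᵢ = 0 for all 3 ≤ i ≤ n−1, then dim Der(L) = n + 2. -/
open scoped BigOperators

/-- Structure constants of `L(β₃,…,β_{n-1},γ) ∈ SLbₙ`:
`[e₁,e₁] = e₃`; `[eᵢ,e₁] = e_{i+1}` for `3 ≤ i ≤ n-1`;
`[e₁,e₂] = β₃e₄ + ⋯ + β_{n-1}eₙ`; `[e₂,e₂] = γeₙ`;
`[eⱼ,e₂] = β₃e_{j+2} + ⋯ + β_{n+1-j}eₙ` for `3 ≤ j ≤ n-2`. -/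
noncomputable def cSLb (n : ℕ) (β : ℕ → ℂ) (γ : ℂ) : Fin n → Fin n → Fin n → ℂ :=
  fun i j k =>
  if j.val = 0 then
    (if i.val = 0 ∧ k.val = 2 then 1
     else if 2 ≤ i.val ∧ i.val ≤ n - 2 ∧ k.val = i.val + 1 then 1
     else 0)
  else if j.val = 1 then
    (if i.val = 0 ∧ 3 ≤ k.val then β k.val
     else if i.val = 1 ∧ k.val = n - 1 then γ
     else if 2 ≤ i.val ∧ i.val ≤ n - 3 ∧ i.val + 2 ≤ k.val then β (k.val - i.val + 1)
     else 0)
  else 0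

/-- The right multiplication by the first basis vector, when all parameters vanish. -/
noncomputable def shiftT (n : ℕ) (hn : 5 ≤ n) : (Fin n → ℂ) →ₗ[ℂ] (Fin n → ℂ) where
  toFun x i := if i.val ≤ 1 then 0 else if i.val = 2 then x ⟨0, by omega⟩
    else x ⟨i.val - 1, by omega⟩
  map_add' x y := by
    funext i
    simp only [Pi.add_apply]
    split_ifs <;> simp
  map_smul' t x := by
    funext i
    simp only [Pi.smul_apply, RingHom.id_apply]
    split_ifs <;> simp

lemma shiftT_apply (n : ℕ) (hn : 5 ≤ n) (x : Fin n → ℂ) (i : Fin n) :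
    shiftT n hn x i = if i.val ≤ 1 then 0 else if i.val = 2 then x ⟨0, by omega⟩
    else x ⟨i.val - 1, by omega⟩ := rfl

lemma cSLb_zero (n : ℕ) (hn : 5 ≤ n) (β : ℕ → ℂ) (γ : ℂ)
    (hγ : γ = 0) (hβ : ∀ i, 3 ≤ i → i ≤ n - 1 → β i = 0) (i j k : Fin n) :
    cSLb n β γ i j k = if j = ⟨0, by omega⟩ then
      shiftT n hn (Pi.single i 1) k else 0 := by
  have hi := i.isLt
  have hk := k.isLt
  simp only [cSLb, shiftT_apply, Pi.single_apply, Fin.ext_iff]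
  by_cases hj : j.val = 0
  · simp only [hj, if_true]
    split_ifs <;> first | rfl | omega | contradiction
  · simp only [hj, if_false]
    split_ifs
    · exact hβ _ (by omega) (by omega)
    · exact hγ
    · exact hβ _ (by omega) (by omega)
    · rfl
    · rfl

lemma structMul_zero (n : ℕ) (hn : 5 ≤ n) (β : ℕ → ℂ) (γ : ℂ)
    (hγ : γ = 0) (hβ : ∀ i, 3 ≤ i → i ≤ n - 1 → β i = 0) (x y : Fin n → ℂ) :
    structMul n (cSLb n β γ) x y = y ⟨0, by omega⟩ • shiftT n hn x := by
  funext k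
  simp only [structMul, LinearMap.mk₂_apply, cSLb_zero n hn β γ hγ hβ, mul_ite, mul_zero,
    Finset.sum_ite_eq', Finset.mem_univ, if_true]
  have hx := congrFun (congrArg (shiftT n hn) (pi_eq_sum_univ' x)) k
  rw [map_sum] at hx
  simp only [map_smul, Finset.sum_apply, Pi.smul_apply, smul_eq_mul] at hx
  simp only [Pi.smul_apply, smul_eq_mul]
  rw [hx, Finset.mul_sum]
  refine Finset.sum_congr rfl fun i _ => ?_
  ring

lemma mem_der_iff_s14 (n : ℕ) (hn : 5 ≤ n) (β : ℕ → ℂ) (γ : ℂ)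
    (hγ : γ = 0) (hβ : ∀ i, 3 ≤ i → i ≤ n - 1 → β i = 0) (d : Module.End ℂ (Fin n → ℂ)) :
    d ∈ derivations n (structMul n (cSLb n β γ)) ↔ ∀ x y : Fin n → ℂ,
      y ⟨0, by omega⟩ • d (shiftT n hn x) =
        y ⟨0, by omega⟩ • shiftT n hn (d x) + (d y) ⟨0, by omega⟩ • shiftT n hn x := by
  change (∀ x y, _) ↔ _
  simp only [structMul_zero n hn β γ hγ hβ, map_smul]

lemma shiftT_single (n : ℕ) (hn : 5 ≤ n) (j : Fin n) (h0 : 2 ≤ j.val) (h : j.val + 1 < n) :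
    shiftT n hn (Pi.single j 1) = Pi.single ⟨j.val + 1, h⟩ 1 := by
  funext i
  simp only [shiftT_apply, Pi.single_apply, Fin.ext_iff]
  split_ifs <;> first | rfl | omega | contradiction

lemma shiftT_single_zero (n : ℕ) (hn : 5 ≤ n) :
    shiftT n hn (Pi.single ⟨0, by omega⟩ 1) = Pi.single ⟨2, by omega⟩ 1 := by
  funext i
  simp only [shiftT_apply, Pi.single_apply, Fin.ext_iff]
  split_ifs <;> first | rfl | omega | contradiction

lemma shiftT_single_one (n : ℕ) (hn : 5 ≤ n) :
    shiftT n hn (Pi.single ⟨1, by omega⟩ 1) = 0 := by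
  funext i
  simp only [shiftT_apply, Pi.single_apply, Fin.ext_iff, Pi.zero_apply]
  split_ifs <;> first | rfl | omega | contradiction

lemma shiftT_single_last (n : ℕ) (hn : 5 ≤ n) (j : Fin n) (h : j.val + 1 = n) :
    shiftT n hn (Pi.single j 1) = 0 := by
  funext i
  have := i.isLt
  simp only [shiftT_apply, Pi.single_apply, Fin.ext_iff, Pi.zero_apply]
  split_ifs <;> first | rfl | omega | contradiction

/-- Matrix entries of the derivation with prescribed parameters. -/
noncomputable def derEntry (n : ℕ) (A : ℕ → ℂ) (p q : ℂ) (i j : ℕ) : ℂ :=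
  if j = 0 then A i
  else if j = 1 then (if i = 1 then p else if i = n - 1 then q else 0)
  else if i = j then j * A 0
  else if j < i then A (i - j + 1) else 0

lemma derEntry_ge (n : ℕ) (A : ℕ → ℂ) (p q : ℂ) (i j : ℕ) (hj : 2 ≤ j) :
    derEntry n A p q i j = if i = j then j * A 0 else if j < i then A (i - j + 1) else 0 := by
  rw [derEntry, if_neg (by omega), if_neg (by omega)]

/-- The derivation with prescribed parameters. -/
noncomputable def derMap (n : ℕ) (A : ℕ → ℂ) (p q : ℂ) : Module.End ℂ (Fin n → ℂ) :=
  Matrix.toLin' (Matrix.of fun i j : Fin n => derEntry n A p q i j)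

lemma derMap_single (n : ℕ) (A : ℕ → ℂ) (p q : ℂ) (i j : Fin n) :
    derMap n A p q (Pi.single j 1) i = derEntry n A p q i j := by
  simp [derMap]

lemma derMap_comm (n : ℕ) (hn : 5 ≤ n) (A : ℕ → ℂ) (p q : ℂ) (x : Fin n → ℂ) :
    derMap n A p q (shiftT n hn x) = shiftT n hn (derMap n A p q x) + A 0 • shiftT n hn x := by
  suffices h : derMap n A p q ∘ₗ shiftT n hn =
      shiftT n hn ∘ₗ derMap n A p q + A 0 • shiftT n hn from LinearMap.congr_fun h x
  refine LinearMap.pi_ext' fun j => LinearMap.ext_ring ?_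
  funext i
  simp only [LinearMap.comp_apply, LinearMap.add_apply, LinearMap.smul_apply,
    LinearMap.single_apply, Pi.add_apply, Pi.smul_apply, smul_eq_mul]
  have hi := i.isLt
  have hj := j.isLt
  rcases Nat.lt_or_ge j.val 2 with h2 | h2
  · rcases Nat.lt_or_ge j.val 1 with h1 | h1
    · have hz : j = ⟨0, by omega⟩ := Fin.ext (by simp; omega)
      rw [hz, shiftT_single_zero, derMap_single, shiftT_apply, derMap_single, derMap_single]
      simp only [derEntry, Pi.single_apply, Fin.ext_iff]
      split_ifs <;> first | omega | contradiction | skip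
      all_goals first | (push_cast; ring1) | skip
      all_goals
        rw [show i.val - 2 + 1 = i.val - 1 by omega]; ring
    · have hz : j = ⟨1, by omega⟩ := Fin.ext (by simp; omega)
      rw [hz, shiftT_single_one, map_zero, shiftT_apply, derMap_single, derMap_single]
      simp only [derEntry, Pi.zero_apply]
      split_ifs <;> first | omega | contradiction | simp
  · rcases Nat.lt_or_ge (j.val + 1) n with h1 | h1
    · rw [shiftT_single n hn j h2 h1, derMap_single, shiftT_apply, derMap_single, derMap_single,
        derEntry_ge _ _ _ _ _ _ (by simp; omega), derEntry_ge _ _ _ _ _ _ h2,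
        derEntry_ge _ _ _ _ _ _ h2, Pi.single_apply]
      simp only [Fin.ext_iff]
      rcases lt_trichotomy i.val (j.val + 1) with h | h | h
      · rw [if_neg (by omega), if_neg (by omega)]
        split_ifs <;> first | omega | simp
      · rw [if_pos h, if_neg (by omega), if_neg (by omega), if_pos (by omega), if_pos h]
        push_cast
        ring
      · rw [if_neg (by omega), if_pos h, if_neg (by omega), if_neg (by omega), if_neg (by omega),
          if_pos (by omega), if_neg (by omega),
          show i.val - (j.val + 1) + 1 = i.val - 1 - j.val + 1 by omega]
        ring
    · rw [shiftT_single_last n hn j (by omega), map_zero, shiftT_apply, derMap_single,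
        derMap_single]
      simp only [derEntry, Pi.zero_apply]
      split_ifs <;> first | omega | contradiction | simp

lemma derMap_zero (n : ℕ) (hn : 5 ≤ n) (A : ℕ → ℂ) (p q : ℂ) (x : Fin n → ℂ) :
    derMap n A p q x ⟨0, by omega⟩ = A 0 * x ⟨0, by omega⟩ := by
  suffices h : LinearMap.proj ⟨0, by omega⟩ ∘ₗ derMap n A p q =
      A 0 • (LinearMap.proj ⟨0, by omega⟩ : (Fin n → ℂ) →ₗ[ℂ] ℂ) from LinearMap.congr_fun h x
  refine LinearMap.pi_ext' fun j => LinearMap.ext_ring ?_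
  simp only [LinearMap.comp_apply, LinearMap.smul_apply, LinearMap.proj_apply,
    LinearMap.single_apply, smul_eq_mul]
  rw [derMap_single]
  simp only [derEntry, Pi.single_apply, Fin.ext_iff]
  split_ifs <;> first | omega | contradiction | simp

/-- The parameters of an endomorphism. -/
noncomputable def params (n : ℕ) (hn : 5 ≤ n) :
    Module.End ℂ (Fin n → ℂ) →ₗ[ℂ] (Fin n → ℂ) × ℂ × ℂ where
  toFun d := (d (Pi.single ⟨0, by omega⟩ 1), d (Pi.single ⟨1, by omega⟩ 1) ⟨1, by omega⟩,
    d (Pi.single ⟨1, by omega⟩ 1) ⟨n - 1, by omega⟩)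
  map_add' _ _ := rfl
  map_smul' _ _ := rfl

lemma params_inj (n : ℕ) (hn : 5 ≤ n) (β : ℕ → ℂ) (γ : ℂ)
    (hγ : γ = 0) (hβ : ∀ i, 3 ≤ i → i ≤ n - 1 → β i = 0) (d : Module.End ℂ (Fin n → ℂ))
    (hd : d ∈ derivations n (structMul n (cSLb n β γ))) (h : params n hn d = 0) : d = 0 := by
  rw [mem_der_iff_s14 n hn β γ hγ hβ] at hd
  obtain ⟨h0, h1⟩ := Prod.mk.inj h
  obtain ⟨h1, h2⟩ := Prod.mk.inj h1
  have hc : ∀ x, d (shiftT n hn x) = shiftT n hn (d x) := by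
    intro x
    have := hd x (Pi.single ⟨0, by omega⟩ 1)
    rw [h0] at this
    simpa using this
  have key : ∀ (m : ℕ) (hm : m + 2 < n), d (Pi.single ⟨m + 2, hm⟩ 1) = 0 := by
    intro m
    induction m with
    | zero =>
      intro hm
      have := hc (Pi.single ⟨0, by omega⟩ 1)
      rw [shiftT_single_zero, h0, map_zero] at this
      exact this
    | succ m ih =>
      intro hm
      have := hc (Pi.single ⟨m + 2, by omega⟩ 1)
      rw [shiftT_single n hn _ (by simp) (by simp; omega), ih, map_zero] at this
      exact this
  have h3 : d (Pi.single ⟨1, by omega⟩ 1) = 0 := by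
    have hs := hc (Pi.single ⟨1, by omega⟩ 1)
    rw [shiftT_single_one, map_zero] at hs
    funext i
    have hi := i.isLt
    by_cases hi0 : i.val = 0
    · have := congrFun hs ⟨2, by omega⟩
      rw [shiftT_apply] at this
      simp only [Pi.zero_apply] at this
      have hz : i = ⟨0, by omega⟩ := Fin.ext hi0
      rw [hz]
      simpa using this.symm
    by_cases hi1 : i.val = 1
    · have hz : i = ⟨1, by omega⟩ := Fin.ext hi1
      rw [hz]
      exact h1
    by_cases hin : i.val = n - 1
    · have hz : i = ⟨n - 1, by omega⟩ := Fin.ext hin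
      rw [hz]
      exact h2
    · have := congrFun hs ⟨i.val + 1, by omega⟩
      rw [shiftT_apply, if_neg (by simp; omega), if_neg (by simp; omega)] at this
      exact this.symm
  refine LinearMap.pi_ext' fun j => LinearMap.ext_ring ?_
  simp only [LinearMap.comp_apply, LinearMap.single_apply, LinearMap.zero_apply]
  obtain ⟨j, hj⟩ := j
  rcases j with _ | _ | j
  · exact h0
  · exact h3
  · exact key j hj

theorem dim_der_SLb_case1 (n : ℕ) (hn : 5 ≤ n) (β : ℕ → ℂ) (γ : ℂ)
    (hγ : γ = 0) (hβ : ∀ i, 3 ≤ i → i ≤ n - 1 → β i = 0) :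
    Module.finrank ℂ (derivations n (structMul n (cSLb n β γ))) = n + 2 := by
  let f := (params n hn).domRestrict (derivations n (structMul n (cSLb n β γ)))
  have hinj : Function.Injective f := by
    intro d₁ d₂ h
    have h' : params n hn d₁.1 = params n hn d₂.1 := h
    exact Subtype.ext (sub_eq_zero.1 (params_inj n hn β γ hγ hβ (d₁.1 - d₂.1)
      (Submodule.sub_mem _ d₁.2 d₂.2) (by rw [map_sub, h', sub_self])))
  have hsurj : Function.Surjective f := by
    rintro ⟨a, p, q⟩
    let A : ℕ → ℂ := fun k => if h : k < n then a ⟨k, h⟩ else 0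
    refine ⟨⟨derMap n A p q, ?_⟩, ?_⟩
    · rw [mem_der_iff_s14 n hn β γ hγ hβ]
      intro x y
      rw [derMap_comm, derMap_zero n hn, smul_add, smul_smul, mul_comm (A 0)]
    · change params n hn (derMap n A p q) = _
      refine Prod.ext ?_ (Prod.ext ?_ ?_)
      · funext i
        change derMap n A p q (Pi.single _ 1) i = a i
        rw [derMap_single]
        simp [derEntry, A]
      · change derMap n A p q (Pi.single _ 1) _ = p
        rw [derMap_single]
        simp [derEntry]
      · change derMap n A p q (Pi.single _ 1) _ = q
        rw [derMap_single]
        have : n - 1 ≠ 1 := by omega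
        simp [derEntry, this]
  rw [(LinearEquiv.ofBijective f ⟨hinj, hsurj⟩).finrank_eq]
  simp
end
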